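/- Let σ be the α-approximate adaptive greedy policy and let π* be an adaptive covering policy of minimum expected cost. If the utility function f is real-valued, then E[C(σ)] ≤ α(ln(Q/η) + 1)·E[C(π*)]. -/

import Mathlib

/-!
Common framework for the Stochastic Submodular Cover problem
(Hellerstein–Kletenik–Parthasarathy, "A Tight Bound for Stochastic Submodular Cover").
-/

namespace SSC

open Finset
open scoped Classical

noncomputable section

variable {E O : Type*}

/-- A subrealization assigns to each item either a state or `none` (unassigned).
A realization corresponds to the case where every item is assigned. -/
abbrev Sub (E O : Type*) := E → Option O

/-- `subext ψ ψ'` means `ψ ⊆ ψ'` as partial assignments of states to items. -/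
def subext (ψ ψ' : Sub E O) : Prop := ∀ e o, ψ e = some o → ψ' e = some o

/-- `ssubext ψ ψ'` means `ψ ⊂ ψ'` (strict extension). -/
def ssubext (ψ ψ' : Sub E O) : Prop := subext ψ ψ' ∧ ψ ≠ ψ'

/-- Extend a subrealization `ψ` by assigning state `o` to item `e`. -/
def updateSub [DecidableEq E] (ψ : Sub E O) (e : E) (o : O) : Sub E O :=
  fun e' => if e' = e then some o else ψ e'

/-- View a (full) realization as a subrealization. -/
def toSub (φ : E → O) : Sub E O := fun e => some (φ e)

variable [Fintype E] [DecidableEq E] [Fintype O] [DecidableEq O]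

/-- An instance of the Stochastic Submodular Cover problem: positive item costs `c`,
a probability mass function `p` on realizations with mutually independent item states,
and a utility function `f` on subrealizations which is zero on the empty subrealization,
nonnegative, monotone and submodular (pointwise polymatroid), and equal to the goal
value `Q > 0` on every full realization (coverability). -/
structure Problem (E O : Type*) [Fintype E] [DecidableEq E] [Fintype O] [DecidableEq O] where
  c : E → ℝ
  c_pos : ∀ e, 0 < c e
  p : (E → O) → ℝ
  p_nonneg : ∀ φ, 0 ≤ p φ
  p_sum : ∑ φ : E → O, p φ = 1
  indep : ∀ φ : E → O, p φ = ∏ e : E, ∑ φ' : E → O, if φ' e = φ e then p φ' else 0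
  f : Sub E O → ℝ
  f_nonneg : ∀ ψ, 0 ≤ f ψ
  f_empty : f (fun _ => none) = 0
  f_mono : ∀ ψ ψ' : Sub E O, subext ψ ψ' → f ψ ≤ f ψ'
  f_submod : ∀ (ψ ψ' : Sub E O) (e : E) (o : O), subext ψ ψ' → ψ' e = none →
      f (updateSub ψ' e o) - f ψ' ≤ f (updateSub ψ e o) - f ψ
  Q : ℝ
  Q_pos : 0 < Q
  f_cover : ∀ φ : E → O, f (toSub φ) = Q

variable (M : Problem E O)

/-- Expectation of a random variable `X` with respect to the random realization `Φ`. -/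
def Ex (X : (E → O) → ℝ) : ℝ := ∑ φ : E → O, M.p φ * X φ

/-- Probability of an event `A` of the random realization `Φ`. -/
def Pr (A : (E → O) → Prop) : ℝ := ∑ φ : E → O, if A φ then M.p φ else 0

/-- Conditional expectation `E[X | A]`. -/
def cEx (X : (E → O) → ℝ) (A : (E → O) → Prop) : ℝ :=
  (∑ φ : E → O, if A φ then M.p φ * X φ else 0) / Pr M A

/-- The random marginal increase in utility `F_ψ(e)` from observing the state of `e`. -/
def Fm (ψ : Sub E O) (e : E) (φ : E → O) : ℝ := M.f (updateSub ψ e (φ e)) - M.f ψ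

/-- The unit price `υ(e|ψ) = c(e) / E[F_ψ(e)]`. -/
def price (ψ : Sub E O) (e : E) : ℝ := M.c e / Ex M (Fm M ψ e)

/-- An adaptive covering policy: at every subrealization `ψ` with `f ψ < Q` it selects an
item outside `dom ψ`. -/
def IsPolicy (π : Sub E O → E) : Prop := ∀ ψ : Sub E O, M.f ψ < M.Q → ψ (π ψ) = none

/-- The `α`-approximate adaptive greedy policy: at every `ψ` with `f ψ < Q` the unit price of
the selected item `σ ψ` is at most `α` times the minimum unit price, i.e.
`υ(σ ψ | ψ) ≤ α · υ(e | ψ)` for every `e ∉ dom ψ`, written multiplicatively so that infinite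
unit prices (zero expected marginal utility) are handled correctly. -/
def IsGreedy (α : ℝ) (σ : Sub E O → E) : Prop :=
  IsPolicy M σ ∧
    ∀ ψ : Sub E O, M.f ψ < M.Q → ∀ e : E, ψ e = none →
      M.c (σ ψ) * Ex M (Fm M ψ e) ≤ α * M.c e * Ex M (Fm M ψ (σ ψ))

/-- One step of executing policy `π` on realization `φ`. -/
def stepPol (π : Sub E O → E) (φ : E → O) (ψ : Sub E O) : Sub E O :=
  if M.f ψ < M.Q then updateSub ψ (π ψ) (φ (π ψ)) else ψ

/-- The subrealization reached after `n` steps of executing `π` on `φ`. -/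
def execAux (π : Sub E O → E) (φ : E → O) : ℕ → Sub E O
  | 0 => fun _ => none
  | n + 1 => stepPol M π φ (execAux π φ n)

/-- The cover `Ψ(π)` constructed by executing `π` on realization `φ`. -/
def cover (π : Sub E O → E) (φ : E → O) : Sub E O := execAux M π φ (Fintype.card E)

/-- `ψ` is visited when executing `π` on realization `φ`. -/
def visits (π : Sub E O → E) (φ : E → O) (ψ : Sub E O) : Prop := ∃ n, execAux M π φ n = ψ

/-- The set `S(π)` of items selected when executing `π` on `φ`. -/
def Ssel (π : Sub E O → E) (φ : E → O) : Finset E :=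
  Finset.univ.filter fun e => cover M π φ e ≠ none

/-- The cost `C(π)` incurred when executing `π` on `φ`. -/
def C (π : Sub E O → E) (φ : E → O) : ℝ := ∑ e ∈ Ssel M π φ, M.c e

/-- An adaptive covering policy of minimum expected cost. -/
def IsOptimal (π : Sub E O → E) : Prop :=
  IsPolicy M π ∧ ∀ π' : Sub E O → E, IsPolicy M π' → Ex M (C M π) ≤ Ex M (C M π')

/-- `N(π)`: the non-leaf nodes of the decision tree of `π` — subrealizations with
`f ψ < Q` that are visited with positive probability. -/
def Nnodes (π : Sub E O → E) : Finset (Sub E O) :=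
  Finset.univ.filter fun ψ => M.f ψ < M.Q ∧ 0 < Pr M fun φ => visits M π φ ψ

/-- The event `ψ ↝ i`, for a marker located at utility value `b = f(ρ_i)`:
`ψ` is the last subrealization visited by `σ` (on the given realization) whose
utility is at most `b`. -/
def leadsTo (σ : Sub E O → E) (b : ℝ) (ψ : Sub E O) (φ : E → O) : Prop :=
  visits M σ φ ψ ∧ M.f ψ ≤ b ∧
    ∀ ψ' : Sub E O, visits M σ φ ψ' → M.f ψ' ≤ b → subext ψ' ψ

/-- The revenue `λ_i = υ_ψ · ε_i` collected by `σ` from the marker located at utility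
value `b = f(ρ_i)` with interval length `εi`, where `ψ` is the unique subrealization
with `ψ ↝ i`. -/
def lam (σ : Sub E O → E) (b εi : ℝ) (φ : E → O) : ℝ :=
  ∑ ψ : Sub E O, if leadsTo M σ b ψ φ then price M ψ (σ ψ) * εi else 0

/-- The revenue `μ(e)` collected by the optimal policy `πs` from item `e`
(relative to the greedy policy `σ`, both executed on the same realization). -/
def mu (σ πs : Sub E O → E) (e : E) (φ : E → O) : ℝ :=
  if e ∈ Ssel M πs φ then
    if e ∈ Ssel M σ φ then
      ∑ ψ : Sub E O,
        if visits M σ φ ψ ∧ M.f ψ < M.Q ∧ σ ψ = e then price M ψ e * Fm M ψ e φ else 0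
    else M.c e
  else 0

/-- The total revenue `μ*` collected by the optimal policy. -/
def muStar (σ πs : Sub E O → E) (φ : E → O) : ℝ := ∑ e : E, mu M σ πs e φ

/-- Replay of the internal state of policy `πs` in the second stage of the hybrid policy:
starting from the empty subrealization, repeatedly query `πs`; an item whose state is
already recorded in `ψ'` is not re-selected, its recorded state being used instead. -/
def replayAux (πs : Sub E O → E) (ψ' : Sub E O) : ℕ → Sub E O
  | 0 => fun _ => none
  | n + 1 =>
    if M.f (replayAux πs ψ' n) < M.Q then
      match ψ' (πs (replayAux πs ψ' n)) with
      | some o => updateSub (replayAux πs ψ' n) (πs (replayAux πs ψ' n)) o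
      | none => replayAux πs ψ' n
    else replayAux πs ψ' n

/-- The hybrid policy `π^ψ0`: follow `σ` until `ψ0` is visited, then switch to executing
`πs` from the root of its tree, never re-selecting an item of `dom ψ0` and using the
state recorded in `ψ0` instead. -/
def hybrid (σ πs : Sub E O → E) (ψ0 : Sub E O) : Sub E O → E := fun ψ' =>
  if subext ψ0 ψ' then πs (replayAux M πs ψ' (Fintype.card E)) else σ ψ'

/-- `δ⁺_ψ0(e)`: the marginal utility obtained by the hybrid policy `π^ψ0` when it selects
`e` during its second stage, and `0` if `e` is not selected in the second stage. -/
def deltaPlus (σ πs : Sub E O → E) (ψ0 : Sub E O) (e : E) (φ : E → O) : ℝ :=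
  ∑ ψ' : Sub E O,
    if subext ψ0 ψ' ∧ visits M (hybrid M σ πs ψ0) φ ψ' ∧
        ssubext ψ' (cover M (hybrid M σ πs ψ0) φ) ∧ hybrid M σ πs ψ0 ψ' = e
    then Fm M ψ' e φ else 0


/-!
Run the greedy policy until its utility would exceed a level `b < Q`, and let `ψ` be the
subrealization it has then reached. For any covering policy `π`, `Q - f ψ` is at most the sum of
the marginals `F_ψ(e)` over the items `e` that `π` selects, while `υ(σ ψ|ψ) * E[F_ψ(e)] ≤ α * c e`
by greediness. Independence of the item states turns this into
`E[υ(σ ψ|ψ)] * max (Q - b) η ≤ α * E[C(π)]`, because `Q - f ψ` is at least `Q - b` and at least `η`.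
The expected cost of the greedy policy is the integral of `E[υ(σ ψ|ψ)]` over the levels
`b ∈ [0, Q]`, and `∫ b in 0..Q, 1 / max (Q - b) η = log (Q / η) + 1`. So the markers of the paper
become a continuum of levels, with revenue density `lam M σ b 1` at the level `b`.
-/

section Integral

open MeasureTheory intervalIntegral

variable {F : Type*} {u : ℕ → ℝ} {a : ℕ → F} {g : ℝ → F}

theorem eqOn_uIoo_of_eqOn_Ico (hu : Monotone u)
    (hg : ∀ n, Set.EqOn g (fun _ => a n) (Set.Ico (u n) (u (n + 1)))) (n : ℕ) :
    Set.EqOn (fun _ => a n) g (Set.uIoo (u n) (u (n + 1))) := by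
  rw [Set.uIoo_of_le (hu n.le_succ)]
  exact ((hg n).mono Set.Ioo_subset_Ico_self).symm

variable [NormedAddCommGroup F]

theorem intervalIntegrable_of_eqOn_Ico (hu : Monotone u)
    (hg : ∀ n, Set.EqOn g (fun _ => a n) (Set.Ico (u n) (u (n + 1)))) (N : ℕ) :
    IntervalIntegrable g volume (u 0) (u N) :=
  IntervalIntegrable.trans_iterate fun n _ =>
    intervalIntegrable_const.congr_uIoo (eqOn_uIoo_of_eqOn_Ico hu hg n)

theorem integral_eq_sum_of_eqOn_Ico [NormedSpace ℝ F] [CompleteSpace F] (hu : Monotone u)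
    (hg : ∀ n, Set.EqOn g (fun _ => a n) (Set.Ico (u n) (u (n + 1)))) (N : ℕ) :
    ∫ x in u 0..u N, g x = ∑ n ∈ range N, (u (n + 1) - u n) • a n := by
  rw [← sum_integral_adjacent_intervals fun n _ =>
    intervalIntegrable_const.congr_uIoo (eqOn_uIoo_of_eqOn_Ico hu hg n)]
  refine sum_congr rfl fun n _ => ?_
  rw [← integral_congr_uIoo (eqOn_uIoo_of_eqOn_Ico hu hg n), intervalIntegral.integral_const]

theorem intervalIntegrable_inv_max {η : ℝ} (hη : 0 < η) (a b : ℝ) :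
    IntervalIntegrable (fun x => (max x η)⁻¹) volume a b :=
  Continuous.intervalIntegrable
    ((continuous_id.max continuous_const).inv₀ fun _ => (lt_max_of_lt_right hη).ne') a b

theorem integral_inv_max {Q η : ℝ} (hη : 0 < η) (hηQ : η ≤ Q) :
    ∫ x in 0..Q, (max x η)⁻¹ = Real.log (Q / η) + 1 := by
  rw [← integral_add_adjacent_intervals (intervalIntegrable_inv_max hη 0 η)
    (intervalIntegrable_inv_max hη η Q)]
  have below : ∫ x in 0..η, (max x η)⁻¹ = 1 := by
    rw [integral_congr_Ioo_of_le (g := fun _ => η⁻¹) hη.le fun x hx => by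
      simp only [max_eq_right hx.2.le]]
    simp [hη.ne']
  have above : ∫ x in η..Q, (max x η)⁻¹ = Real.log (Q / η) := by
    rw [integral_congr_Ioo_of_le (g := fun x => x⁻¹) hηQ fun x hx => by
      simp only [max_eq_left hx.1.le]]
    exact integral_inv_of_pos hη (hη.trans_le hηQ)
  rw [below, above, add_comm]

end Integral

section Subrealization

omit [Fintype E] [Fintype O] [DecidableEq O]

theorem updateSub_eq_update (ψ : Sub E O) (e : E) (o : O) :
    updateSub ψ e o = Function.update ψ e (some o) := by
  funext e'
  simp only [updateSub, Function.update_apply]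

theorem subext_updateSub {ψ : Sub E O} {e : E} (he : ψ e = none) (o : O) :
    subext ψ (updateSub ψ e o) := by
  intro e' o' h
  have hne : e' ≠ e := by
    rintro rfl
    simp [he] at h
  rwa [updateSub, if_neg hne]

omit [DecidableEq E]

theorem subext.refl (ψ : Sub E O) : subext ψ ψ := fun _ _ h => h

theorem subext.trans {ψ₁ ψ₂ ψ₃ : Sub E O} (h₁₂ : subext ψ₁ ψ₂) (h₂₃ : subext ψ₂ ψ₃) :
    subext ψ₁ ψ₃ := fun e o h => h₂₃ e o (h₁₂ e o h)

theorem subext.eq_none {ψ ψ' : Sub E O} (h : subext ψ ψ') {e : E} (he : ψ' e = none) :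
    ψ e = none :=
  Option.eq_none_iff_forall_ne_some.2 fun o ho => by simp [h e o ho] at he

theorem subext.antisymm {ψ ψ' : Sub E O} (h : subext ψ ψ') (h' : subext ψ' ψ) : ψ = ψ' :=
  funext fun e => Option.ext fun o => ⟨h e o, h' e o⟩

theorem subext_toSub_getD (ψ : Sub E O) (φ : E → O) :
    subext ψ (toSub fun e => (ψ e).getD (φ e)) := fun e o h => by simp [toSub, h]

end Subrealization

section Domain

omit [DecidableEq E] [Fintype O] [DecidableEq O]

/-- The domain `dom ψ` of a subrealization. -/
def dom (ψ : Sub E O) : Finset E := univ.filter fun e => ψ e ≠ none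

theorem mem_dom {ψ : Sub E O} {e : E} : e ∈ dom ψ ↔ ψ e ≠ none := by simp [dom]

theorem dom_updateSub [DecidableEq E] (ψ : Sub E O) (e : E) (o : O) :
    dom (updateSub ψ e o) = insert e (dom ψ) := by
  ext e'
  by_cases h : e' = e <;> simp [mem_dom, updateSub, h]

end Domain

theorem Ssel_eq_dom_cover (π : Sub E O → E) (φ : E → O) : Ssel M π φ = dom (cover M π φ) := by
  ext e
  simp [Ssel, mem_dom]

section Expectation

theorem Ex_mono {X Y : (E → O) → ℝ} (h : ∀ φ, X φ ≤ Y φ) : Ex M X ≤ Ex M Y :=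
  sum_le_sum fun φ _ => mul_le_mul_of_nonneg_left (h φ) (M.p_nonneg φ)

theorem Ex_sum {ι : Type*} (s : Finset ι) (X : ι → (E → O) → ℝ) :
    Ex M (fun φ => ∑ i ∈ s, X i φ) = ∑ i ∈ s, Ex M (X i) := by
  simp only [Ex, mul_sum]
  exact sum_comm

theorem Ex_mul_const (X : (E → O) → ℝ) (a : ℝ) : Ex M (fun φ => X φ * a) = Ex M X * a := by
  simp only [Ex, sum_mul, mul_assoc]

theorem Ex_const (a : ℝ) : Ex M (fun _ => a) = a := by
  simp only [Ex, ← sum_mul, M.p_sum, one_mul]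

theorem exists_p_pos : ∃ φ, 0 < M.p φ := by
  by_contra! h
  exact one_ne_zero (M.p_sum.symm.trans (sum_eq_zero fun φ _ => (h φ).antisymm (M.p_nonneg φ)))

theorem exists_Ex_pos_of_forall_sum_pos {ι : Type*} {s : Finset ι} {X : ι → (E → O) → ℝ}
    (h : ∀ φ, 0 < ∑ i ∈ s, X i φ) : ∃ i ∈ s, 0 < Ex M (X i) := by
  obtain ⟨φ₀, hφ₀⟩ := exists_p_pos M
  apply exists_lt_of_sum_lt
  rw [sum_const_zero, ← Ex_sum]
  exact sum_pos' (fun φ _ => mul_nonneg (M.p_nonneg φ) (h φ).le)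
    ⟨φ₀, mem_univ _, mul_pos hφ₀ (h φ₀)⟩

/-- The law of the state `Φ(e)` of the item `e`. -/
def marginal (e : E) (o : O) : ℝ := ∑ φ, if φ e = o then M.p φ else 0

theorem marginal_nonneg (e : E) (o : O) : 0 ≤ marginal M e o :=
  sum_nonneg fun φ _ => ite_nonneg (M.p_nonneg φ) le_rfl

theorem sum_marginal (e : E) : ∑ o, marginal M e o = 1 := by
  simp only [marginal]
  rw [sum_comm, ← M.p_sum]
  simp

theorem p_eq_prod_marginal (φ : E → O) : M.p φ = ∏ e, marginal M e (φ e) := M.indep φ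

theorem p_mul_marginal_comm (φ : E → O) (e : E) (o : O) :
    M.p φ * marginal M e o = M.p (Function.update φ e o) * marginal M e (φ e) := by
  have off_e : ∏ x ∈ univ.erase e, marginal M x (Function.update φ e o x)
      = ∏ x ∈ univ.erase e, marginal M x (φ x) :=
    prod_congr rfl fun x hx => by rw [Function.update_of_ne (ne_of_mem_erase hx)]
  rw [p_eq_prod_marginal, p_eq_prod_marginal, ← mul_prod_erase univ _ (mem_univ e),
    ← mul_prod_erase univ _ (mem_univ e), off_e, Function.update_self]
  ring

/-- The conditional expectation of `X` given the states of all items other than `e`: the state of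
`e` is drawn afresh. -/
def resample (e : E) (X : (E → O) → ℝ) (φ : E → O) : ℝ :=
  ∑ o, marginal M e o * X (Function.update φ e o)

theorem Ex_resample (e : E) (X : (E → O) → ℝ) : Ex M (resample M e X) = Ex M X := by
  -- Exchanging the drawn state with the state of `e` preserves the law of the pair.
  have swap : ∑ x : (E → O) × O, M.p x.1 * marginal M e x.2 * X (Function.update x.1 e x.2)
      = ∑ x : (E → O) × O, M.p x.1 * marginal M e x.2 * X x.1 := by
    have involutive : Function.Involutive
        fun x : (E → O) × O => (Function.update x.1 e x.2, x.1 e) := fun _ => by simp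
    refine Fintype.sum_equiv involutive.toPerm _ _ fun x => ?_
    exact congrArg (· * _) (p_mul_marginal_comm M x.1 e x.2)
  simp only [Fintype.sum_prod_type] at swap
  simp only [Ex, resample, mul_sum, ← mul_assoc]
  rw [swap]
  simp only [← sum_mul, ← mul_sum, sum_marginal, mul_one]

theorem resample_comp_eval (e : E) (g : O → ℝ) (φ : E → O) :
    resample M e (fun φ => g (φ e)) φ = Ex M fun φ => g (φ e) := by
  have resample_eq : resample M e (fun φ => g (φ e)) = fun _ => ∑ o, marginal M e o * g o := by
    funext φ
    simp only [resample, Function.update_self]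
  rw [← Ex_resample M e, resample_eq, Ex_const]

theorem resample_mul {e : E} {X : (E → O) → ℝ}
    (hX : ∀ φ o, X (Function.update φ e o) = X φ) (Y : (E → O) → ℝ) (φ : E → O) :
    resample M e (fun φ => X φ * Y φ) φ = X φ * resample M e Y φ := by
  simp only [resample, hX, mul_sum]
  exact sum_congr rfl fun o _ => mul_left_comm _ _ _

theorem Ex_mul_comp_eval {e : E} {X : (E → O) → ℝ}
    (hX : ∀ φ o, X (Function.update φ e o) = X φ) (g : O → ℝ) :
    Ex M (fun φ => X φ * g (φ e)) = Ex M X * Ex M fun φ => g (φ e) := by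
  rw [← Ex_resample M e, ← Ex_mul_const]
  exact congrArg (Ex M) <| funext fun φ => by rw [resample_mul M hX, resample_comp_eval]

theorem Ex_mul_le_of_resample_le {e : E} {X Y : (E → O) → ℝ} {a : ℝ} (hX₀ : ∀ φ, 0 ≤ X φ)
    (hX : ∀ φ o, X (Function.update φ e o) = X φ) (hY : ∀ φ, resample M e Y φ ≤ a) :
    Ex M (fun φ => X φ * Y φ) ≤ Ex M X * a := by
  rw [← Ex_resample M e, ← Ex_mul_const]
  refine Ex_mono M fun φ => ?_
  rw [resample_mul M hX]
  exact mul_le_mul_of_nonneg_left (hY φ) (hX₀ φ)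

end Expectation

section Utility

theorem f_le_Q (ψ : Sub E O) : M.f ψ ≤ M.Q := by
  obtain ⟨φ, _⟩ := exists_p_pos M
  rw [← M.f_cover]
  exact M.f_mono _ _ (subext_toSub_getD ψ φ)

theorem f_eq_Q_of_dom_eq_univ {ψ : Sub E O} (h : dom ψ = univ) : M.f ψ = M.Q := by
  obtain ⟨φ, _⟩ := exists_p_pos M
  have full : toSub (fun e => (ψ e).getD (φ e)) = ψ := by
    funext e
    obtain ⟨o, ho⟩ := Option.ne_none_iff_exists'.1 (mem_dom.1 (h ▸ mem_univ e))
    simp [toSub, ho]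
  rw [← full, M.f_cover]

theorem Fm_nonneg {ψ : Sub E O} {e : E} (he : ψ e = none) (φ : E → O) : 0 ≤ Fm M ψ e φ :=
  sub_nonneg.2 (M.f_mono _ _ (subext_updateSub he _))

theorem Ex_Fm_nonneg {ψ : Sub E O} {e : E} (he : ψ e = none) : 0 ≤ Ex M (Fm M ψ e) :=
  sum_nonneg fun φ _ => mul_nonneg (M.p_nonneg φ) (Fm_nonneg M he φ)

theorem f_piecewise_toSub_le {ψ : Sub E O} {S : Finset E} (hS : ∀ e ∈ S, ψ e = none)
    (φ : E → O) : M.f (S.piecewise (toSub φ) ψ) ≤ M.f ψ + ∑ e ∈ S, Fm M ψ e φ := by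
  induction S using Finset.induction_on with
  | empty => simp
  | insert e S he ih =>
    have hψS : subext ψ (S.piecewise (toSub φ) ψ) := by
      intro e' o h
      have : e' ∉ S := fun hmem => by simp [hS e' (mem_insert_of_mem hmem)] at h
      rwa [piecewise_eq_of_notMem _ _ _ this]
    have hnone : S.piecewise (toSub φ) ψ e = none := by
      rw [piecewise_eq_of_notMem _ _ _ he, hS e (mem_insert_self e S)]
    have submod := M.f_submod _ _ e (φ e) hψS hnone
    rw [piecewise_insert, toSub, ← updateSub_eq_update, sum_insert he, Fm]
    linarith [ih fun e' h => hS e' (mem_insert_of_mem h)]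

theorem f_sub_f_le_sum_Fm {ψ ψ' : Sub E O} {φ : E → O} {S : Finset E}
    (hS : ∀ e ∈ S, ψ e = none) (h : subext ψ' (S.piecewise (toSub φ) ψ)) :
    M.f ψ' - M.f ψ ≤ ∑ e ∈ S, Fm M ψ e φ :=
  sub_le_iff_le_add'.2 ((M.f_mono _ _ h).trans (f_piecewise_toSub_le M hS φ))

theorem Q_sub_f_le_sum_Fm (ψ : Sub E O) (φ : E → O) :
    M.Q - M.f ψ ≤ ∑ e with ψ e = none, Fm M ψ e φ := by
  rw [← M.f_cover fun e => (ψ e).getD (φ e)]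
  refine f_sub_f_le_sum_Fm M (fun e he => (mem_filter.1 he).2) fun e o h => ?_
  cases hψ : ψ e <;> simpa [Finset.piecewise, toSub, hψ] using h

end Utility

section Execution

variable {M} {π : Sub E O → E}

theorem execAux_succ_of_lt {φ : E → O} {n : ℕ} (h : M.f (execAux M π φ n) < M.Q) :
    execAux M π φ (n + 1)
      = updateSub (execAux M π φ n) (π (execAux M π φ n)) (φ (π (execAux M π φ n))) :=
  if_pos h

theorem execAux_succ_of_not_lt {φ : E → O} {n : ℕ} (h : ¬ M.f (execAux M π φ n) < M.Q) :
    execAux M π φ (n + 1) = execAux M π φ n :=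
  if_neg h

theorem execAux_subext_toSub (φ : E → O) (n : ℕ) : subext (execAux M π φ n) (toSub φ) := by
  induction n with
  | zero => simp [subext, execAux]
  | succ n ih =>
    by_cases h : M.f (execAux M π φ n) < M.Q
    · rw [execAux_succ_of_lt h]
      intro e o he
      by_cases heq : e = π (execAux M π φ n)
      · simpa [updateSub, toSub, heq] using he
      · exact ih e o (by simpa [updateSub, heq] using he)
    · rwa [execAux_succ_of_not_lt h]

theorem execAux_subext_succ (hπ : IsPolicy M π) (φ : E → O) (n : ℕ) :
    subext (execAux M π φ n) (execAux M π φ (n + 1)) := by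
  by_cases h : M.f (execAux M π φ n) < M.Q
  · rw [execAux_succ_of_lt h]
    exact subext_updateSub (hπ _ h) _
  · rw [execAux_succ_of_not_lt h]
    exact subext.refl _

theorem execAux_subext (hπ : IsPolicy M π) (φ : E → O) {m n : ℕ} (h : m ≤ n) :
    subext (execAux M π φ m) (execAux M π φ n) := by
  induction n, h using Nat.le_induction with
  | base => exact subext.refl _
  | succ n _ ih => exact ih.trans (execAux_subext_succ hπ φ n)

theorem monotone_f_execAux (hπ : IsPolicy M π) (φ : E → O) :
    Monotone fun n => M.f (execAux M π φ n) :=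
  fun _ _ h => M.f_mono _ _ (execAux_subext hπ φ h)

theorem sum_dom_execAux {A : Type*} [AddCommMonoid A] (hπ : IsPolicy M π) (w : E → A)
    (φ : E → O) (N : ℕ) :
    ∑ e ∈ dom (execAux M π φ N), w e = ∑ n ∈ range N,
      if M.f (execAux M π φ n) < M.Q then w (π (execAux M π φ n)) else 0 := by
  induction N with
  | zero => simp [dom, execAux]
  | succ N ih =>
    rw [sum_range_succ, ← ih]
    by_cases h : M.f (execAux M π φ N) < M.Q
    · have fresh : π (execAux M π φ N) ∉ dom (execAux M π φ N) := by
        simpa [mem_dom] using hπ _ h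
      rw [if_pos h, execAux_succ_of_lt h, dom_updateSub, sum_insert fresh, add_comm]
    · rw [if_neg h, execAux_succ_of_not_lt h, add_zero]

theorem card_dom_execAux (hπ : IsPolicy M π) {φ : E → O} {N : ℕ}
    (h : M.f (execAux M π φ N) < M.Q) : #(dom (execAux M π φ N)) = N := by
  rw [card_eq_sum_ones, sum_dom_execAux hπ, sum_congr rfl fun n hn =>
    if_pos ((monotone_f_execAux hπ φ (mem_range_le hn)).trans_lt h)]
  simp

theorem f_cover_eq_Q (hπ : IsPolicy M π) (φ : E → O) : M.f (cover M π φ) = M.Q := by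
  by_contra hne
  have hlt : M.f (cover M π φ) < M.Q := lt_of_le_of_ne (f_le_Q M _) hne
  exact hne (f_eq_Q_of_dom_eq_univ M (eq_univ_of_card _ (card_dom_execAux hπ hlt)))

theorem C_eq_sum_execAux (hπ : IsPolicy M π) (φ : E → O) :
    C M π φ = ∑ n ∈ range (Fintype.card E),
      if M.f (execAux M π φ n) < M.Q then M.c (π (execAux M π φ n)) else 0 := by
  rw [C, Ssel_eq_dom_cover, cover, sum_dom_execAux hπ]

theorem Q_sub_f_le_sum_Ssel_Fm (hπ : IsPolicy M π) {φ : E → O} {ψ : Sub E O}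
    (hψ : subext ψ (toSub φ)) :
    M.Q - M.f ψ ≤ ∑ e ∈ Ssel M π φ with ψ e = none, Fm M ψ e φ := by
  rw [← f_cover_eq_Q hπ φ]
  refine f_sub_f_le_sum_Fm M (fun e he => (mem_filter.1 he).2) fun e o h => ?_
  have hsel : e ∈ Ssel M π φ := by simp [Ssel, h]
  have ho : toSub φ e = some o := execAux_subext_toSub φ _ e o h
  cases hψe : ψ e with
  | none => rwa [piecewise_eq_of_mem _ _ _ (mem_filter.2 ⟨hsel, hψe⟩)]
  | some o' => simp [Finset.piecewise, hψe, ← ho, hψ e o' hψe]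

theorem execAux_update (hπ : IsPolicy M π) {φ : E → O} {e : E} {n : ℕ}
    (h : execAux M π φ n e = none) (o : O) :
    execAux M π (Function.update φ e o) n = execAux M π φ n := by
  induction n with
  | zero => rfl
  | succ n ih =>
    have same := ih ((execAux_subext_succ hπ φ n).eq_none h)
    by_cases hlt : M.f (execAux M π φ n) < M.Q
    · have hne : π (execAux M π φ n) ≠ e := by
        rintro rfl
        simp [execAux_succ_of_lt hlt, updateSub] at h
      rw [execAux_succ_of_lt (same ▸ hlt), same, Function.update_of_ne hne,
        execAux_succ_of_lt hlt]
    · rw [execAux_succ_of_not_lt (same ▸ hlt), same, execAux_succ_of_not_lt hlt]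

theorem execAux_update_eq_iff (hπ : IsPolicy M π) {ψ : Sub E O} {e : E} (he : ψ e = none)
    (φ : E → O) (o : O) (n : ℕ) :
    execAux M π (Function.update φ e o) n = ψ ↔ execAux M π φ n = ψ := by
  constructor <;> rintro rfl
  · have := execAux_update hπ he (φ e)
    rw [Function.update_idem, Function.update_eq_self] at this
    exact this
  · exact execAux_update hπ he o

theorem visits_update_iff (hπ : IsPolicy M π) {ψ : Sub E O} {e : E} (he : ψ e = none)
    (φ : E → O) (o : O) : visits M π (Function.update φ e o) ψ ↔ visits M π φ ψ :=
  exists_congr (execAux_update_eq_iff hπ he φ o)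

theorem mem_Ssel_update_iff (hπ : IsPolicy M π) (φ : E → O) (e : E) (o : O) :
    e ∈ Ssel M π (Function.update φ e o) ↔ e ∈ Ssel M π φ := by
  rw [Ssel_eq_dom_cover, Ssel_eq_dom_cover, mem_dom, mem_dom, not_iff_not]
  constructor <;> intro h
  · rwa [cover, (execAux_update_eq_iff hπ h φ o _).1 rfl]
  · rwa [cover, (execAux_update_eq_iff hπ h φ o _).2 rfl]

theorem Ex_mul_f_execAux_succ_sub (hπ : IsPolicy M π) (w : Sub E O → ℝ) (n : ℕ) :
    Ex M (fun φ => w (execAux M π φ n) *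
        (M.f (execAux M π φ (n + 1)) - M.f (execAux M π φ n)))
      = Ex M fun φ => if M.f (execAux M π φ n) < M.Q then
        w (execAux M π φ n) * Ex M (Fm M (execAux M π φ n) (π (execAux M π φ n))) else 0 := by
  set reach : Sub E O → (E → O) → ℝ := fun ψ φ => if execAux M π φ n = ψ then w ψ else 0
  have gain_eq : ∀ φ, w (execAux M π φ n) *
      (M.f (execAux M π φ (n + 1)) - M.f (execAux M π φ n))
      = ∑ ψ with M.f ψ < M.Q, reach ψ φ * Fm M ψ (π ψ) φ := by
    intro φ
    by_cases h : M.f (execAux M π φ n) < M.Q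
    · simp [reach, h, Fm, execAux_succ_of_lt]
    · simp [reach, h, execAux_succ_of_not_lt]
  have mean_eq : ∀ φ, (if M.f (execAux M π φ n) < M.Q then
      w (execAux M π φ n) * Ex M (Fm M (execAux M π φ n) (π (execAux M π φ n))) else 0)
      = ∑ ψ with M.f ψ < M.Q, reach ψ φ * Ex M (Fm M ψ (π ψ)) := by
    intro φ
    simp [reach]
  simp only [gain_eq, mean_eq, Ex_sum, Ex_mul_const]
  refine sum_congr rfl fun ψ hψ => ?_
  refine Ex_mul_comp_eval M (fun φ o => ?_) fun o => M.f (updateSub ψ (π ψ) o) - M.f ψ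
  simp only [reach, execAux_update_eq_iff hπ (hπ ψ (mem_filter.1 hψ).2)]

end Execution

section LeadsTo

variable {M} {σ : Sub E O → E} {b : ℝ}

theorem leadsTo.eq {φ : E → O} {ψ ψ' : Sub E O} (h : leadsTo M σ b ψ φ)
    (h' : leadsTo M σ b ψ' φ) : ψ' = ψ :=
  (h.2.2 ψ' h'.1 h'.2.1).antisymm (h'.2.2 ψ h.1 h.2.1)

theorem leadsTo_execAux (hσ : IsPolicy M σ) {φ : E → O} {n : ℕ}
    (hb : b ∈ Set.Ico (M.f (execAux M σ φ n)) (M.f (execAux M σ φ (n + 1)))) :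
    leadsTo M σ b (execAux M σ φ n) φ := by
  refine ⟨⟨n, rfl⟩, hb.1, ?_⟩
  rintro _ ⟨m, rfl⟩ hm
  have hmn : m < n + 1 := (monotone_f_execAux hσ φ).reflect_lt (hm.trans_lt hb.2)
  exact execAux_subext hσ φ (Nat.lt_succ_iff.1 hmn)

theorem exists_leadsTo (hσ : IsPolicy M σ) (φ : E → O) (hb : b ∈ Set.Ico 0 M.Q) :
    ∃ ψ, leadsTo M σ b ψ φ := by
  by_contra! none_leads
  have stays : ∀ n, M.f (execAux M σ φ n) ≤ b := by
    intro n
    induction n with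
    | zero => simpa [execAux, M.f_empty] using hb.1
    | succ n ih => exact not_lt.1 fun h => none_leads _ (leadsTo_execAux hσ ⟨ih, h⟩)
  exact hb.2.not_ge (f_cover_eq_Q hσ φ ▸ stays (Fintype.card E))

theorem leadsTo.subext_toSub {φ : E → O} {ψ : Sub E O} (h : leadsTo M σ b ψ φ) :
    subext ψ (toSub φ) := by
  obtain ⟨n, rfl⟩ := h.1
  exact execAux_subext_toSub φ n

theorem leadsTo.eq_of_update (hσ : IsPolicy M σ) {φ : E → O} {e : E} {o o' : O} {ψ ψ' : Sub E O}
    (h : leadsTo M σ b ψ (Function.update φ e o)) (he : ψ e = none)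
    (h' : leadsTo M σ b ψ' (Function.update φ e o')) (he' : ψ' e = none) : ψ' = ψ := by
  have visits_iff : ∀ {ψ : Sub E O}, ψ e = none →
      (visits M σ (Function.update φ e o) ψ ↔ visits M σ (Function.update φ e o') ψ) :=
    fun he => (visits_update_iff hσ he φ o).trans (visits_update_iff hσ he φ o').symm
  exact (h.2.2 ψ' ((visits_iff he').2 h'.1) h'.2.1).antisymm
    (h'.2.2 ψ ((visits_iff he).1 h.1) h.2.1)

theorem lam_eq_of_leadsTo {φ : E → O} {ψ : Sub E O} (h : leadsTo M σ b ψ φ) (ε : ℝ) :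
    lam M σ b ε φ = price M ψ (σ ψ) * ε := by
  have leadsTo_iff : ∀ ψ', leadsTo M σ b ψ' φ ↔ ψ' = ψ :=
    fun ψ' => ⟨h.eq, fun heq => heq ▸ h⟩
  simp [lam, leadsTo_iff]

theorem lam_eqOn_Ico (hσ : IsPolicy M σ) (φ : E → O) (n : ℕ) :
    Set.EqOn (fun b => lam M σ b 1 φ)
      (fun _ => price M (execAux M σ φ n) (σ (execAux M σ φ n)))
      (Set.Ico (M.f (execAux M σ φ n)) (M.f (execAux M σ φ (n + 1)))) := fun b hb => by
  simp only [lam_eq_of_leadsTo (leadsTo_execAux hσ hb), mul_one]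

theorem intervalIntegrable_lam (hσ : IsPolicy M σ) (φ : E → O) :
    IntervalIntegrable (fun b => lam M σ b 1 φ) MeasureTheory.volume 0 M.Q := by
  have := intervalIntegrable_of_eqOn_Ico (monotone_f_execAux hσ φ) (lam_eqOn_Ico hσ φ)
    (Fintype.card E)
  rwa [show M.f (execAux M σ φ 0) = 0 from M.f_empty,
    show M.f (execAux M σ φ (Fintype.card E)) = M.Q from f_cover_eq_Q hσ φ] at this

theorem integral_lam (hσ : IsPolicy M σ) (φ : E → O) :
    ∫ b in 0..M.Q, lam M σ b 1 φ = ∑ n ∈ range (Fintype.card E),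
      price M (execAux M σ φ n) (σ (execAux M σ φ n)) *
        (M.f (execAux M σ φ (n + 1)) - M.f (execAux M σ φ n)) := by
  have := integral_eq_sum_of_eqOn_Ico (monotone_f_execAux hσ φ) (lam_eqOn_Ico hσ φ)
    (Fintype.card E)
  rw [show M.f (execAux M σ φ 0) = 0 from M.f_empty,
    show M.f (execAux M σ φ (Fintype.card E)) = M.Q from f_cover_eq_Q hσ φ] at this
  simpa only [smul_eq_mul, mul_comm] using this

/-- The revenue density `lam M σ b 1` at the level `b`, averaged over realizations. -/
def meanLam (M : Problem E O) (σ : Sub E O → E) (b : ℝ) : ℝ := Ex M (lam M σ b 1)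

theorem intervalIntegrable_meanLam (hσ : IsPolicy M σ) :
    IntervalIntegrable (meanLam M σ) MeasureTheory.volume 0 M.Q := by
  have := IntervalIntegrable.sum univ fun φ _ => (intervalIntegrable_lam hσ φ).const_mul (M.p φ)
  rwa [sum_fn] at this

theorem integral_meanLam (hσ : IsPolicy M σ) :
    ∫ b in 0..M.Q, meanLam M σ b = Ex M fun φ => ∫ b in 0..M.Q, lam M σ b 1 φ := by
  simp only [meanLam, Ex]
  rw [intervalIntegral.integral_finsetSum fun φ _ => (intervalIntegrable_lam hσ φ).const_mul _]
  simp only [intervalIntegral.integral_const_mul]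

/-- The part due to the item `e` of the bound `υ(σ ψ|ψ) * ∑ F_ψ(e)` on the revenue
`υ(σ ψ|ψ) * (Q - f ψ)`, where `ψ` is the subrealization reached at the level `b`. -/
def share (M : Problem E O) (σ : Sub E O → E) (b : ℝ) (e : E) (φ : E → O) : ℝ :=
  ∑ ψ : Sub E O,
    if leadsTo M σ b ψ φ ∧ ψ e = none then price M ψ (σ ψ) * Fm M ψ e φ else 0

theorem share_eq_of_leadsTo {φ : E → O} {ψ : Sub E O} (h : leadsTo M σ b ψ φ) (e : E) :
    share M σ b e φ = if ψ e = none then price M ψ (σ ψ) * Fm M ψ e φ else 0 := by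
  have leadsTo_iff : ∀ ψ', leadsTo M σ b ψ' φ ↔ ψ' = ψ :=
    fun ψ' => ⟨h.eq, fun heq => heq ▸ h⟩
  simp [share, leadsTo_iff, ite_and]

end LeadsTo

section Greedy

variable {M} {α : ℝ} {σ π : Sub E O → E}

theorem IsGreedy.Ex_Fm_pos (hσ : IsGreedy M α σ) {ψ : Sub E O} (hψ : M.f ψ < M.Q) :
    0 < Ex M (Fm M ψ (σ ψ)) := by
  obtain ⟨e, he, hpos⟩ := exists_Ex_pos_of_forall_sum_pos M fun φ =>
    (sub_pos.2 hψ).trans_le (Q_sub_f_le_sum_Fm M ψ φ)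
  refine (Ex_Fm_nonneg M (hσ.1 ψ hψ)).lt_of_ne' fun hzero => ?_
  have hle := hσ.2 ψ hψ e (mem_filter.1 he).2
  rw [hzero, mul_zero] at hle
  exact hle.not_gt (mul_pos (M.c_pos _) hpos)

theorem IsGreedy.one_le (hσ : IsGreedy M α σ) : 1 ≤ α := by
  have hlt : M.f (fun _ => none) < M.Q := M.f_empty ▸ M.Q_pos
  have hle := hσ.2 _ hlt (σ fun _ => none) (hσ.1 _ hlt)
  rw [mul_assoc] at hle
  exact one_le_of_le_mul_right₀ (mul_pos (M.c_pos _) (hσ.Ex_Fm_pos hlt)) hle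

theorem IsGreedy.price_nonneg (hσ : IsGreedy M α σ) {ψ : Sub E O} (hψ : M.f ψ < M.Q) :
    0 ≤ price M ψ (σ ψ) :=
  div_nonneg (M.c_pos _).le (hσ.Ex_Fm_pos hψ).le

theorem IsGreedy.price_mul_Ex_Fm (hσ : IsGreedy M α σ) {ψ : Sub E O} (hψ : M.f ψ < M.Q) :
    price M ψ (σ ψ) * Ex M (Fm M ψ (σ ψ)) = M.c (σ ψ) :=
  div_mul_cancel₀ _ (hσ.Ex_Fm_pos hψ).ne'

theorem IsGreedy.price_mul_Ex_Fm_le (hσ : IsGreedy M α σ) {ψ : Sub E O} (hψ : M.f ψ < M.Q)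
    {e : E} (he : ψ e = none) : price M ψ (σ ψ) * Ex M (Fm M ψ e) ≤ α * M.c e := by
  rw [price, div_mul_eq_mul_div, div_le_iff₀ (hσ.Ex_Fm_pos hψ)]
  exact hσ.2 ψ hψ e he

theorem IsGreedy.Ex_C_eq_integral (hσ : IsGreedy M α σ) :
    Ex M (C M σ) = ∫ b in 0..M.Q, meanLam M σ b := by
  simp only [integral_meanLam hσ.1, integral_lam hσ.1, funext (C_eq_sum_execAux hσ.1), Ex_sum]
  refine sum_congr rfl fun n _ => ?_
  rw [Ex_mul_f_execAux_succ_sub hσ.1 fun ψ => price M ψ (σ ψ)]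
  refine congrArg (Ex M) (funext fun φ => ?_)
  split_ifs with h
  · exact (hσ.price_mul_Ex_Fm h).symm
  · rfl

theorem IsGreedy.share_le (hσ : IsGreedy M α σ) {b : ℝ} (hb : b ∈ Set.Ico 0 M.Q) {φ : E → O}
    {e : E} {o : O} {ψ : Sub E O} (hψ : leadsTo M σ b ψ (Function.update φ e o))
    (he : ψ e = none) (o' : O) : share M σ b e (Function.update φ e o')
      ≤ price M ψ (σ ψ) * Fm M ψ e (Function.update φ e o') := by
  obtain ⟨ψ', hψ'⟩ := exists_leadsTo hσ.1 (Function.update φ e o') hb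
  rw [share_eq_of_leadsTo hψ']
  split_ifs with he'
  · rw [hψ.eq_of_update hσ.1 he hψ' he']
  · exact mul_nonneg (hσ.price_nonneg (hψ.2.1.trans_lt hb.2)) (Fm_nonneg M he _)

/-- Among the realizations differing only at `e`, those whose level-`b` subrealization leaves `e`
unselected all reach the same one. -/
theorem IsGreedy.resample_share_le (hσ : IsGreedy M α σ) {b : ℝ} (hb : b ∈ Set.Ico 0 M.Q)
    (e : E) (φ : E → O) : resample M e (share M σ b e) φ ≤ α * M.c e := by
  by_cases hex : ∃ o ψ, leadsTo M σ b ψ (Function.update φ e o) ∧ ψ e = none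
  · obtain ⟨o, ψ, hψ, he⟩ := hex
    calc resample M e (share M σ b e) φ
        ≤ resample M e (fun φ => price M ψ (σ ψ) * Fm M ψ e φ) φ :=
          sum_le_sum fun o' _ =>
            mul_le_mul_of_nonneg_left (hσ.share_le hb hψ he o') (marginal_nonneg M e o')
      _ = price M ψ (σ ψ) * Ex M (Fm M ψ e) := by
          rw [resample_mul M fun _ _ => rfl]
          exact congrArg _ (resample_comp_eval M e (fun o => M.f (updateSub ψ e o) - M.f ψ) φ)
      _ ≤ α * M.c e := hσ.price_mul_Ex_Fm_le (hψ.2.1.trans_lt hb.2) he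
  · push Not at hex
    have share_eq_zero : ∀ o, share M σ b e (Function.update φ e o) = 0 := fun o =>
      sum_eq_zero fun ψ _ => if_neg fun h => hex o ψ h.1 h.2
    simp only [resample, share_eq_zero, mul_zero, sum_const_zero]
    exact mul_nonneg (zero_le_one.trans hσ.one_le) (M.c_pos e).le

theorem IsGreedy.lam_mul_le_sum_share (hσ : IsGreedy M α σ) (hπ : IsPolicy M π) {b d : ℝ}
    (hb : b ∈ Set.Ico 0 M.Q) (hd : ∀ ψ, M.f ψ ≤ b → d ≤ M.Q - M.f ψ) (φ : E → O) :
    lam M σ b 1 φ * d ≤ ∑ e ∈ Ssel M π φ, share M σ b e φ := by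
  obtain ⟨ψ, hψ⟩ := exists_leadsTo hσ.1 φ hb
  calc lam M σ b 1 φ * d = price M ψ (σ ψ) * d := by rw [lam_eq_of_leadsTo hψ, mul_one]
    _ ≤ price M ψ (σ ψ) * ∑ e ∈ Ssel M π φ with ψ e = none, Fm M ψ e φ :=
        mul_le_mul_of_nonneg_left
          ((hd ψ hψ.2.1).trans (Q_sub_f_le_sum_Ssel_Fm hπ hψ.subext_toSub))
          (hσ.price_nonneg (hψ.2.1.trans_lt hb.2))
    _ = ∑ e ∈ Ssel M π φ, share M σ b e φ := by
        simp only [mul_sum, sum_filter, mul_ite, mul_zero, share_eq_of_leadsTo hψ]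

theorem IsGreedy.meanLam_mul_le (hσ : IsGreedy M α σ) (hπ : IsPolicy M π) {b d : ℝ}
    (hb : b ∈ Set.Ico 0 M.Q) (hd : ∀ ψ, M.f ψ ≤ b → d ≤ M.Q - M.f ψ) :
    meanLam M σ b * d ≤ α * Ex M (C M π) := by
  set selected : E → (E → O) → ℝ := fun e φ => if e ∈ Ssel M π φ then 1 else 0
  have C_eq : C M π = fun φ => ∑ e, selected e φ * M.c e := by
    funext φ
    simp [selected, C]
  calc meanLam M σ b * d = Ex M (fun φ => lam M σ b 1 φ * d) := (Ex_mul_const M _ d).symm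
    _ ≤ Ex M (fun φ => ∑ e, selected e φ * share M σ b e φ) := by
        refine Ex_mono M fun φ => (hσ.lam_mul_le_sum_share hπ hb hd φ).trans_eq ?_
        simp [selected]
    _ = ∑ e, Ex M (fun φ => selected e φ * share M σ b e φ) := Ex_sum M _ _
    _ ≤ ∑ e, Ex M (selected e) * (α * M.c e) := sum_le_sum fun e _ =>
        Ex_mul_le_of_resample_le M (fun φ => ite_nonneg zero_le_one le_rfl)
          (fun φ o => by simp only [selected, mem_Ssel_update_iff hπ])
          (hσ.resample_share_le hb e)
    _ = α * Ex M (C M π) := by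
        simp only [C_eq, Ex_sum, Ex_mul_const, mul_sum, mul_left_comm α]

end Greedy

theorem greedy_approx_real_general {M : Problem E O} {α : ℝ} {σ π : Sub E O → E}
    (hσ : IsGreedy M α σ) (hπ : IsPolicy M π) {η : ℝ} (hη : 0 < η)
    (hgap : ∀ ψ, M.f ψ < M.Q → η ≤ M.Q - M.f ψ) :
    Ex M (C M σ) ≤ α * (Real.log (M.Q / η) + 1) * Ex M (C M π) := by
  set K := α * Ex M (C M π)
  have hηQ : η ≤ M.Q := by
    simpa [M.f_empty] using hgap (fun _ => none) (M.f_empty ▸ M.Q_pos)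
  have density_le : ∀ b ∈ Set.Ioo 0 M.Q, meanLam M σ b ≤ K * (max (M.Q - b) η)⁻¹ := by
    intro b hb
    rw [← div_eq_mul_inv, le_div_iff₀ (lt_max_of_lt_right hη)]
    exact hσ.meanLam_mul_le hπ (Set.Ioo_subset_Ico_self hb) fun ψ hψ =>
      max_le (sub_le_sub_left hψ _) (hgap ψ (hψ.trans_lt hb.2))
  calc Ex M (C M σ) = ∫ b in 0..M.Q, meanLam M σ b := hσ.Ex_C_eq_integral
    _ ≤ ∫ b in 0..M.Q, K * (max (M.Q - b) η)⁻¹ :=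
        intervalIntegral.integral_mono_on_of_le_Ioo M.Q_pos.le (intervalIntegrable_meanLam hσ.1)
          (by simpa using ((intervalIntegrable_inv_max hη M.Q 0).comp_sub_left M.Q).const_mul K)
          density_le
    _ = K * (Real.log (M.Q / η) + 1) := by
        rw [intervalIntegral.integral_const_mul,
          intervalIntegral.integral_comp_sub_left (fun x => (max x η)⁻¹), sub_self, sub_zero,
          integral_inv_max hη hηQ]
    _ = α * (Real.log (M.Q / η) + 1) * Ex M (C M π) := by ring

/-- The α-approximate adaptive greedy policy `σ` achieves approximation
factor `α (ln (Q/η) + 1)` relative to an optimal adaptive covering policy `πs`, where `η`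
is the minimum gap `Q - f ψ` over subrealizations `ψ` with `f ψ < Q`. -/
theorem greedy_approx_real
    (M : Problem E O) (α : ℝ) (hα : 1 ≤ α)
    (σ : Sub E O → E) (hσ : IsGreedy M α σ)
    (πs : Sub E O → E) (hπs : IsOptimal M πs)
    (η : ℝ)
    (hη : IsLeast {x : ℝ | ∃ ψ : Sub E O, M.f ψ < M.Q ∧ x = M.Q - M.f ψ} η) :
    Ex M (C M σ) ≤ α * (Real.log (M.Q / η) + 1) * Ex M (C M πs) := by
  obtain ⟨⟨ψ, hψ, rfl⟩, hmin⟩ := hη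
  exact greedy_approx_real_general hσ hπs.1 (sub_pos.2 hψ) fun ψ' h => hmin ⟨ψ', h, rfl⟩

end
end SSC
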